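/- arXiv:1207.5842 — 2 statements merged into one kernel-verified Lean document; each statement's English description precedes it below -/
import Mathlib

section
/- For all words σ, τ ∈ Ω, one has ξ^{-3} |J_σ| |J_τ| ≤ |J_{στ}| ≤ ξ^{3} |J_σ| |J_τ|. -/
open MeasureTheory Filter Metric

noncomputable section

/-- A cookie-cutter system on `J = [0,1]`. -/
structure CookieCutter where
  N : ℕ
  hN : 2 ≤ N
  Jsub : Fin N → Set ℝ
  f : ℝ → ℝ
  φ : Fin N → ℝ → ℝ
  c : ℝ
  γ : ℝ
  b : ℝ
  B : ℝ
  hJsub_sub : ∀ j, Jsub j ⊆ Set.Icc 0 1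
  hJsub_interval : ∀ j, ∃ u v : ℝ, u ≤ v ∧ Jsub j = Set.Icc u v
  hJsub_disj : ∀ i j, i ≠ j → Disjoint (Jsub i) (Jsub j)
  hbij : ∀ j, Set.BijOn f (Jsub j) (Set.Icc 0 1)
  hφ_maps : ∀ j, ∀ x ∈ Set.Icc (0:ℝ) 1, φ j x ∈ Jsub j
  hφ_rinv : ∀ j, ∀ x ∈ Set.Icc (0:ℝ) 1, f (φ j x) = x
  hφ_linv : ∀ j, ∀ x ∈ Jsub j, φ j (f x) = x
  hfdiff : ∀ j, ∀ x ∈ Jsub j, DifferentiableAt ℝ f x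
  hφdiff : ∀ j, ∀ x ∈ Set.Icc (0:ℝ) 1, DifferentiableAt ℝ (φ j) x
  hc : 0 < c
  hγ : γ ∈ Set.Ioc (0:ℝ) 1
  hHolder : ∀ j, ∀ x ∈ Jsub j, ∀ y ∈ Jsub j, |deriv f x - deriv f y| ≤ c * |x - y| ^ γ
  hb : IsGLB ((fun x => |deriv f x|) '' ⋃ j, Jsub j) b
  hB : IsLUB ((fun x => |deriv f x|) '' ⋃ j, Jsub j) B
  hb1 : 1 < b

namespace CookieCutter

variable (cc : CookieCutter)

/-- `φ_σ = φ_{σ_1} ∘ ⋯ ∘ φ_{σ_n}` for a word `σ`. -/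
def wordMap : List (Fin cc.N) → ℝ → ℝ
  | [] => id
  | j :: rest => cc.φ j ∘ wordMap rest

/-- The basic interval `J_σ = φ_σ(J)`. -/
def Jc (σ : List (Fin cc.N)) : Set ℝ := cc.wordMap σ '' Set.Icc 0 1

/-- The diameter `|J_σ|`. -/
def diamJ (σ : List (Fin cc.N)) : ℝ := Metric.diam (cc.Jc σ)

/-- `‖φ'_σ‖ = sup_{x ∈ J} |φ'_σ(x)|`. -/
def φnorm (σ : List (Fin cc.N)) : ℝ :=
  sSup ((fun x => |deriv (cc.wordMap σ) x|) '' Set.Icc 0 1)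

/-- The distortion constant `ξ = exp (c / (b^γ − 1))`. -/
def xi : ℝ := Real.exp (cc.c / (cc.b ^ cc.γ - 1))

/-- The cookie-cutter set `E = ⋂_{n ≥ 1} ⋃_{σ ∈ Ω_n} J_σ`. -/
def E : Set ℝ := ⋂ (n : ℕ) (_ : 1 ≤ n), ⋃ σ : Fin n → Fin cc.N, cc.Jc (List.ofFn σ)

/-- `η = ξ^{9h}`. -/
def eta (h : ℝ) : ℝ := cc.xi ^ ((9:ℝ) * h)

/-- `L = η³ ξ^{3h}`. -/
def Lconst (h : ℝ) : ℝ := (cc.eta h) ^ 3 * cc.xi ^ ((3:ℝ) * h)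

/-- A Gibbs-like measure for the cookie-cutter system: a Borel probability measure
supported on `E` with `η⁻¹|J_σ|^h ≤ μ(J_σ) ≤ η|J_σ|^h` for every word `σ`. -/
def IsGibbsLike (μ : Measure ℝ) (h : ℝ) : Prop :=
  IsProbabilityMeasure μ ∧ μ (cc.Eᶜ) = 0 ∧
    ∀ σ : List (Fin cc.N), σ ≠ [] →
      (cc.eta h)⁻¹ * cc.diamJ σ ^ h ≤ (μ (cc.Jc σ)).toReal ∧
      (μ (cc.Jc σ)).toReal ≤ cc.eta h * cc.diamJ σ ^ h

/-- A finite maximal antichain in `Ω`. -/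
def IsFMA (Γ : Finset (List (Fin cc.N))) : Prop :=
  (∀ σ ∈ Γ, σ ≠ []) ∧
  (∀ ω : ℕ → Fin cc.N, ∃ k : ℕ, 1 ≤ k ∧ (List.ofFn fun i : Fin k => ω i) ∈ Γ) ∧
  ∀ σ ∈ Γ, ∀ τ ∈ Γ, σ <+: τ → σ = τ

end CookieCutter

/-- The `n`-th quantization error of order `r`. -/
def Vnr (μ : Measure ℝ) (n : ℕ) (r : ℝ) : ℝ :=
  sInf ((fun α : Finset ℝ => ∫ x, Metric.infDist x (α : Set ℝ) ^ r ∂μ) ''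
    {α : Finset ℝ | α.Nonempty ∧ α.card ≤ n})

/-- The auxiliary quantization error `u_{n,r}` with `U = (0,1)`. -/
def unr (μ : Measure ℝ) (n : ℕ) (r : ℝ) : ℝ :=
  sInf ((fun α : Finset ℝ =>
      ∫ x, Metric.infDist x ((α : Set ℝ) ∪ (Set.Ioo (0:ℝ) 1)ᶜ) ^ r ∂μ) ''
    {α : Finset ℝ | α.card ≤ n})

/-!
Bounded distortion makes a map multiplicative on diameters up to a constant: if the difference
quotients of `g` over pairs of points of `J` are comparable up to a factor `K`, then so are the
ratios `|g(T)| / |T|` for `T ⊆ J`. With `g = φ_σ`, comparing `T = J_τ` with `T = J` gives both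
inequalities, with constant `K`.

The distortion of `φ_σ` is controlled letter by letter. Prefixing a word of length `n` by `j`
composes with `φ_j`, an inverse of `f` on an interval of length at most `b^{-(n+1)}`. There `f'`
varies by at most `c b^{-γ(n+1)}`, and `|f'| ≥ 1`, so the factor gained is at most
`exp (c b^{-γ(n+1)})`. The exponents sum to at most `c / (b^γ - 1)`, so `K = ξ` works.
-/

theorem sum_Ico_one_inv_pow_le {a : ℝ} (ha : 1 < a) (n : ℕ) :
    ∑ k ∈ Finset.Ico 1 n, a⁻¹ ^ k ≤ (a - 1)⁻¹ := by
  have ha₀ : a ≠ 0 := by linarith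
  have ha₁ : a - 1 ≠ 0 := by linarith
  calc ∑ k ∈ Finset.Ico 1 n, a⁻¹ ^ k ≤ a⁻¹ ^ 1 / (1 - a⁻¹) :=
        geom_sum_Ico_le_of_lt_one (inv_nonneg.2 (by linarith)) (inv_lt_one_of_one_lt₀ ha)
    _ = (a - 1)⁻¹ := by field_simp

theorem exists_dist_image_eq_abs_mul_dist {f f' : ℝ → ℝ} {s : Set ℝ} (hs : s.OrdConnected)
    (hf : ∀ z ∈ s, HasDerivWithinAt f (f' z) s z) {x y : ℝ} (hx : x ∈ s) (hy : y ∈ s) :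
    ∃ z ∈ s, dist (f x) (f y) = |f' z| * dist x y := by
  rcases eq_or_ne x y with rfl | hxy
  · exact ⟨x, hx, by simp⟩
  wlog hlt : x < y generalizing x y
  · simpa only [dist_comm] using this hy hx hxy.symm (hxy.lt_or_gt.resolve_left hlt)
  have hsub : Set.Icc x y ⊆ s := hs.out hx hy
  obtain ⟨z, hz, hslope⟩ := exists_hasDerivAt_eq_slope f f' hlt
    (fun z hz => ((hf z (hsub hz)).mono hsub).continuousWithinAt)
    (fun z hz => ((hf z (hsub (Set.Ioo_subset_Icc_self hz))).mono hsub).hasDerivAt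
      (Icc_mem_nhds hz.1 hz.2))
  refine ⟨z, hsub (Set.Ioo_subset_Icc_self hz), ?_⟩
  rw [dist_comm, dist_comm x, Real.dist_eq, Real.dist_eq, hslope, ← abs_mul,
    div_mul_cancel₀ _ (sub_pos.2 hlt).ne']

section DiamMul

variable {X Y : Type*} [PseudoMetricSpace X] [PseudoMetricSpace Y]

theorem diam_mul_le_of_forall_dist_mul_le {s : Set X} {d C : ℝ} (hd : 0 ≤ d) (hC : 0 ≤ C)
    (h : ∀ x ∈ s, ∀ y ∈ s, dist x y * d ≤ C) : diam s * d ≤ C := by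
  rcases hd.eq_or_lt with rfl | hd
  · rwa [mul_zero]
  · rw [← le_div_iff₀ hd]
    exact diam_le_of_forall_dist_le (by positivity) fun x hx y hy =>
      (le_div_iff₀ hd).2 (h x hx y hy)

theorem diam_mul_diam_le_of_forall_dist_mul_dist_le {s : Set X} {t : Set Y} {C : ℝ} (hC : 0 ≤ C)
    (h : ∀ x ∈ s, ∀ y ∈ s, ∀ u ∈ t, ∀ v ∈ t, dist x y * dist u v ≤ C) :
    diam s * diam t ≤ C := by
  refine diam_mul_le_of_forall_dist_mul_le diam_nonneg hC fun x hx y hy => ?_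
  rw [mul_comm]
  refine diam_mul_le_of_forall_dist_mul_le dist_nonneg hC fun u hu v hv => ?_
  rw [mul_comm]
  exact h x hx y hy u hu v hv

end DiamMul

/-- `g` has distortion at most `K` on `s`: any two difference quotients
`dist (g x) (g y) / dist x y` over points of `s` agree up to the factor `K`. The inequality is
cleared of denominators so that coinciding points need no special treatment. -/
def BoundedDistortionOn {X Y : Type*} [PseudoMetricSpace X] [PseudoMetricSpace Y]
    (K : ℝ) (g : X → Y) (s : Set X) : Prop :=
  ∀ x ∈ s, ∀ y ∈ s, ∀ u ∈ s, ∀ v ∈ s,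
    dist (g x) (g y) * dist u v ≤ K * (dist (g u) (g v) * dist x y)

namespace BoundedDistortionOn

variable {X Y Z : Type*} [PseudoMetricSpace X] {K K' : ℝ}

theorem mono_const [PseudoMetricSpace Y] {g : X → Y} {s : Set X}
    (h : BoundedDistortionOn K g s) (hK : K ≤ K') : BoundedDistortionOn K' g s :=
  fun x hx y hy u hu v hv => (h x hx y hy u hu v hv).trans (by gcongr)

theorem of_leftInvOn [PseudoMetricSpace Y] {f : Y → X} {g : X → Y} {s : Set X} {t : Set Y}
    (h : BoundedDistortionOn K f t) (hg : Set.MapsTo g s t) (hfg : Set.LeftInvOn f g s) :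
    BoundedDistortionOn K g s := by
  intro x hx y hy u hu v hv
  have := h (g u) (hg hu) (g v) (hg hv) (g x) (hg hx) (g y) (hg hy)
  rw [hfg hx, hfg hy, hfg hu, hfg hv] at this
  linarith

theorem comp [MetricSpace Y] [PseudoMetricSpace Z] {g : Y → Z} {f : X → Y} {s : Set X}
    (hg : BoundedDistortionOn K' g (f '' s)) (hf : BoundedDistortionOn K f s) (hK' : 0 ≤ K') :
    BoundedDistortionOn (K' * K) (g ∘ f) s := by
  intro x hx y hy u hu v hv
  have hfxy := hf x hx y hy u hu v hv
  have hgxy := hg _ ⟨x, hx, rfl⟩ _ ⟨y, hy, rfl⟩ _ ⟨u, hu, rfl⟩ _ ⟨v, hv, rfl⟩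
  simp only [Function.comp_apply]
  rcases eq_or_ne (f u) (f v) with huv | huv
  · have hprod : dist (f x) (f y) * dist u v = 0 :=
      le_antisymm (by simpa [huv] using hfxy) (by positivity)
    rcases mul_eq_zero.1 hprod with h | h
    · simp [dist_eq_zero.1 h, huv]
    · simp [h, huv]
  · refine le_of_mul_le_mul_right ?_ (dist_pos.2 huv)
    calc dist (g (f x)) (g (f y)) * dist u v * dist (f u) (f v)
        = dist (g (f x)) (g (f y)) * dist (f u) (f v) * dist u v := by ring
      _ ≤ K' * (dist (g (f u)) (g (f v)) * dist (f x) (f y)) * dist u v := by gcongr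
      _ = K' * dist (g (f u)) (g (f v)) * (dist (f x) (f y) * dist u v) := by ring
      _ ≤ K' * dist (g (f u)) (g (f v)) * (K * (dist (f u) (f v) * dist x y)) := by gcongr
      _ = K' * K * (dist (g (f u)) (g (f v)) * dist x y) * dist (f u) (f v) := by ring

theorem diam_image_mul_diam_le [PseudoMetricSpace Y] {g : X → Y} {s t u : Set X}
    (h : BoundedDistortionOn K g s) (hK : 0 ≤ K) (ht : t ⊆ s) (hu : u ⊆ s)
    (htb : Bornology.IsBounded t) (hub : Bornology.IsBounded (g '' u)) :
    diam (g '' t) * diam u ≤ K * (diam (g '' u) * diam t) := by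
  refine diam_mul_diam_le_of_forall_dist_mul_dist_le
    (mul_nonneg hK (mul_nonneg diam_nonneg diam_nonneg)) ?_
  rintro _ ⟨x, hx, rfl⟩ _ ⟨y, hy, rfl⟩ p hp q hq
  refine (h x (ht hx) y (ht hy) p (hu hp) q (hu hq)).trans ?_
  gcongr
  · exact dist_le_diam_of_mem hub ⟨p, hp, rfl⟩ ⟨q, hq, rfl⟩
  · exact dist_le_diam_of_mem htb hx hy

section Deriv

variable {f f' : ℝ → ℝ} {s : Set ℝ}

theorem of_abs_deriv_le_mul (hs : s.OrdConnected)
    (hf : ∀ z ∈ s, HasDerivWithinAt f (f' z) s z)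
    (hK : ∀ z ∈ s, ∀ w ∈ s, |f' z| ≤ K * |f' w|) : BoundedDistortionOn K f s := by
  intro x hx y hy u hu v hv
  obtain ⟨z, hz, hxy⟩ := exists_dist_image_eq_abs_mul_dist hs hf hx hy
  obtain ⟨w, hw, huv⟩ := exists_dist_image_eq_abs_mul_dist hs hf hu hv
  calc dist (f x) (f y) * dist u v = |f' z| * (dist x y * dist u v) := by rw [hxy]; ring
    _ ≤ K * |f' w| * (dist x y * dist u v) := by gcongr; exact hK z hz w hw
    _ = K * (dist (f u) (f v) * dist x y) := by rw [huv]; ring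

theorem of_holder_deriv {c γ m : ℝ} (hs : s.OrdConnected) (hsb : Bornology.IsBounded s)
    (hf : ∀ z ∈ s, HasDerivWithinAt f (f' z) s z) (hc : 0 ≤ c) (hγ : 0 ≤ γ) (hm : 0 < m)
    (hm_le : ∀ z ∈ s, m ≤ |f' z|)
    (hholder : ∀ z ∈ s, ∀ w ∈ s, |f' z - f' w| ≤ c * |z - w| ^ γ) :
    BoundedDistortionOn (Real.exp (c * diam s ^ γ / m)) f s := by
  refine of_abs_deriv_le_mul hs hf fun z hz w hw => ?_
  set ε := c * diam s ^ γ
  have hε : 0 ≤ ε := mul_nonneg hc (Real.rpow_nonneg diam_nonneg γ)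
  have hosc : |f' z - f' w| ≤ ε := (hholder z hz w hw).trans <|
    mul_le_mul_of_nonneg_left
      (Real.rpow_le_rpow (abs_nonneg _) (dist_le_diam_of_mem hsb hz hw) hγ) hc
  calc |f' z| ≤ ε + |f' w| := by linarith [abs_sub_abs_le_abs_sub (f' z) (f' w)]
    _ = ε / m * m + |f' w| := by rw [div_mul_cancel₀ _ hm.ne']
    _ ≤ ε / m * |f' w| + |f' w| := by
        linarith [mul_le_mul_of_nonneg_left (hm_le w hw) (div_nonneg hε hm.le)]
    _ = (ε / m + 1) * |f' w| := by ring
    _ ≤ Real.exp (ε / m) * |f' w| := by gcongr; exact Real.add_one_le_exp _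

end Deriv

end BoundedDistortionOn

/-- A family, indexed by an arbitrary type, of inverse branches `φ i : J → I i ⊆ J` of expanding
maps `f i` with `γ`-Hölder derivative `f' i`, on a bounded interval `J`. In contrast to a
cookie-cutter system, the `I i` may overlap, each branch has its own map, and derivatives are
taken within `I i`, hence are one-sided at its endpoints. -/
structure ExpandingBranchSystem (ι : Type*) where
  J : Set ℝ
  I : ι → Set ℝ
  f : ι → ℝ → ℝ
  f' : ι → ℝ → ℝ
  φ : ι → ℝ → ℝ
  c : ℝ
  γ : ℝ
  b : ℝ
  ordConnected_J : J.OrdConnected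
  isBounded_J : Bornology.IsBounded J
  ordConnected_I : ∀ i, (I i).OrdConnected
  I_subset_J : ∀ i, I i ⊆ J
  mapsTo_φ : ∀ i, Set.MapsTo (φ i) J (I i)
  leftInvOn_f_φ : ∀ i, Set.LeftInvOn (f i) (φ i) J
  hasDerivWithinAt_f : ∀ i, ∀ x ∈ I i, HasDerivWithinAt (f i) (f' i x) (I i) x
  holder_f' : ∀ i, ∀ x ∈ I i, ∀ y ∈ I i, |f' i x - f' i y| ≤ c * |x - y| ^ γ
  le_abs_f' : ∀ i, ∀ x ∈ I i, b ≤ |f' i x|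
  c_nonneg : 0 ≤ c
  γ_pos : 0 < γ
  one_lt_b : 1 < b

namespace ExpandingBranchSystem

variable {ι : Type*} (S : ExpandingBranchSystem ι)

/-- The composition `φ_{σ_1} ∘ ⋯ ∘ φ_{σ_n}` of inverse branches along a word `σ`. -/
def wordMap : List ι → ℝ → ℝ
  | [] => id
  | i :: σ => S.φ i ∘ wordMap σ

/-- The cylinder `J_σ = φ_σ(J)` of a word `σ`. -/
def cylinder (σ : List ι) : Set ℝ := S.wordMap σ '' S.J

/-- The bound `exp (c |J|^γ / (b^γ - 1))` for the distortion of all the maps `φ_σ`; it is `ξ` when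
`|J| = 1`. -/
def distortionBound : ℝ := Real.exp (S.c * diam S.J ^ S.γ / (S.b ^ S.γ - 1))

theorem one_lt_b_rpow_γ : 1 < S.b ^ S.γ := Real.one_lt_rpow S.one_lt_b S.γ_pos

theorem one_le_distortionBound : 1 ≤ S.distortionBound :=
  Real.one_le_exp <| div_nonneg (mul_nonneg S.c_nonneg (Real.rpow_nonneg diam_nonneg _))
    (sub_nonneg.2 S.one_lt_b_rpow_γ.le)

theorem cylinder_cons (i : ι) (σ : List ι) : S.cylinder (i :: σ) = S.φ i '' S.cylinder σ :=
  Set.image_comp _ _ _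

theorem cylinder_append (σ τ : List ι) :
    S.cylinder (σ ++ τ) = S.wordMap σ '' S.cylinder τ := by
  induction σ with
  | nil => exact (Set.image_id _).symm
  | cons i σ ih => rw [List.cons_append, cylinder_cons, ih, ← Set.image_comp]; rfl

theorem cylinder_subset_J (σ : List ι) : S.cylinder σ ⊆ S.J := by
  induction σ with
  | nil => exact (Set.image_id _).subset
  | cons i σ ih =>
    rw [cylinder_cons]
    exact ((S.mapsTo_φ i).mono ih (S.I_subset_J i)).image_subset

theorem cylinder_cons_subset_I (i : ι) (σ : List ι) : S.cylinder (i :: σ) ⊆ S.I i := by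
  rw [cylinder_cons]
  exact ((S.mapsTo_φ i).mono_left (S.cylinder_subset_J σ)).image_subset

theorem isBounded_cylinder (σ : List ι) : Bornology.IsBounded (S.cylinder σ) :=
  S.isBounded_J.subset (S.cylinder_subset_J σ)

theorem dist_φ_le (i : ι) {x y : ℝ} (hx : x ∈ S.J) (hy : y ∈ S.J) :
    dist (S.φ i x) (S.φ i y) ≤ S.b⁻¹ * dist x y := by
  obtain ⟨z, hz, hdist⟩ := exists_dist_image_eq_abs_mul_dist (S.ordConnected_I i)
    (S.hasDerivWithinAt_f i) (S.mapsTo_φ i hx) (S.mapsTo_φ i hy)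
  rw [S.leftInvOn_f_φ i hx, S.leftInvOn_f_φ i hy] at hdist
  rw [le_inv_mul_iff₀ (one_pos.trans S.one_lt_b), hdist]
  gcongr
  exact S.le_abs_f' i z hz

theorem continuousOn_φ (i : ι) : ContinuousOn (S.φ i) S.J :=
  (LipschitzOnWith.of_dist_le' fun _ hx _ hy => S.dist_φ_le i hx hy).continuousOn

theorem ordConnected_cylinder (σ : List ι) : (S.cylinder σ).OrdConnected := by
  refine IsPreconnected.ordConnected ?_
  induction σ with
  | nil => simpa only [cylinder, wordMap, Set.image_id] using S.ordConnected_J.isPreconnected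
  | cons i σ ih =>
    rw [cylinder_cons]
    exact ih.image _ ((S.continuousOn_φ i).mono (S.cylinder_subset_J σ))

theorem diam_cylinder_le (σ : List ι) :
    diam (S.cylinder σ) ≤ S.b⁻¹ ^ σ.length * diam S.J := by
  have hb : 0 < S.b := one_pos.trans S.one_lt_b
  induction σ with
  | nil => simp [cylinder, wordMap]
  | cons i σ ih =>
    rw [cylinder_cons, List.length_cons, pow_succ', mul_assoc]
    refine diam_le_of_forall_dist_le (by positivity) ?_
    rintro _ ⟨x, hx, rfl⟩ _ ⟨y, hy, rfl⟩
    refine (S.dist_φ_le i (S.cylinder_subset_J σ hx) (S.cylinder_subset_J σ hy)).trans ?_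
    gcongr
    exact (dist_le_diam_of_mem (S.isBounded_cylinder σ) hx hy).trans ih

theorem diam_cylinder_rpow_le (σ : List ι) :
    diam (S.cylinder σ) ^ S.γ ≤ diam S.J ^ S.γ * (S.b ^ S.γ)⁻¹ ^ σ.length := by
  have hb : 0 < S.b := one_pos.trans S.one_lt_b
  calc diam (S.cylinder σ) ^ S.γ ≤ (S.b⁻¹ ^ σ.length * diam S.J) ^ S.γ :=
        Real.rpow_le_rpow diam_nonneg (S.diam_cylinder_le σ) S.γ_pos.le
    _ = diam S.J ^ S.γ * (S.b ^ S.γ)⁻¹ ^ σ.length := by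
        rw [Real.mul_rpow (by positivity) diam_nonneg, ← Real.rpow_pow_comm (by positivity),
          Real.inv_rpow hb.le, mul_comm]

theorem boundedDistortionOn_φ_cylinder (i : ι) (σ : List ι) :
    BoundedDistortionOn (Real.exp (S.c * diam S.J ^ S.γ * (S.b ^ S.γ)⁻¹ ^ (σ.length + 1)))
      (S.φ i) (S.cylinder σ) := by
  have hsub := S.cylinder_cons_subset_I i σ
  have hf : BoundedDistortionOn (Real.exp (S.c * diam (S.cylinder (i :: σ)) ^ S.γ / 1))
      (S.f i) (S.cylinder (i :: σ)) :=
    .of_holder_deriv (S.ordConnected_cylinder _) (S.isBounded_cylinder _)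
      (fun z hz => (S.hasDerivWithinAt_f i z (hsub hz)).mono hsub) S.c_nonneg S.γ_pos.le one_pos
      (fun z hz => S.one_lt_b.le.trans (S.le_abs_f' i z (hsub hz)))
      (fun z hz w hw => S.holder_f' i z (hsub hz) w (hsub hw))
  have hφ := hf.of_leftInvOn (S.cylinder_cons i σ ▸ Set.mapsTo_image _ _)
    ((S.leftInvOn_f_φ i).mono (S.cylinder_subset_J σ))
  refine hφ.mono_const (Real.exp_le_exp.2 ?_)
  rw [div_one, mul_assoc]
  exact mul_le_mul_of_nonneg_left (S.diam_cylinder_rpow_le (i :: σ)) S.c_nonneg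

theorem boundedDistortionOn_wordMap_exp_sum (σ : List ι) :
    BoundedDistortionOn (Real.exp (S.c * diam S.J ^ S.γ *
      ∑ k ∈ Finset.Ico 1 (σ.length + 1), (S.b ^ S.γ)⁻¹ ^ k)) (S.wordMap σ) S.J := by
  induction σ with
  | nil => intro x _ y _ u _ v _; simp [wordMap, mul_comm]
  | cons i σ ih =>
    rw [List.length_cons, Finset.sum_Ico_succ_top (Nat.le_add_left 1 _), mul_add, add_comm,
      Real.exp_add]
    exact (S.boundedDistortionOn_φ_cylinder i σ).comp ih (Real.exp_nonneg _)

theorem boundedDistortionOn_wordMap (σ : List ι) :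
    BoundedDistortionOn S.distortionBound (S.wordMap σ) S.J := by
  refine (S.boundedDistortionOn_wordMap_exp_sum σ).mono_const (Real.exp_le_exp.2 ?_)
  rw [div_eq_mul_inv]
  exact mul_le_mul_of_nonneg_left (sum_Ico_one_inv_pow_le S.one_lt_b_rpow_γ _)
    (mul_nonneg S.c_nonneg (Real.rpow_nonneg diam_nonneg _))

end ExpandingBranchSystem

theorem diam_quasi_multiplicative_general {ι : Type*} (S : ExpandingBranchSystem ι)
    (σ τ : List ι) :
    diam (S.cylinder σ) * diam (S.cylinder τ) ≤
        S.distortionBound * (diam (S.cylinder (σ ++ τ)) * diam S.J) ∧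
      diam (S.cylinder (σ ++ τ)) * diam S.J ≤
        S.distortionBound * (diam (S.cylinder σ) * diam (S.cylinder τ)) := by
  have hdist := S.boundedDistortionOn_wordMap σ
  have hpos : 0 ≤ S.distortionBound := zero_le_one.trans S.one_le_distortionBound
  have hτ := S.cylinder_subset_J τ
  constructor
  · rw [S.cylinder_append]
    exact hdist.diam_image_mul_diam_le hpos subset_rfl hτ S.isBounded_J
      (S.cylinder_append σ τ ▸ S.isBounded_cylinder _)
  · rw [S.cylinder_append]
    exact hdist.diam_image_mul_diam_le hpos hτ subset_rfl (S.isBounded_cylinder τ)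
      (S.isBounded_cylinder σ)

namespace CookieCutter

variable (cc : CookieCutter)

/-- The inverse branches of a cookie-cutter system. -/
def toExpandingBranchSystem : ExpandingBranchSystem (Fin cc.N) where
  J := Set.Icc 0 1
  I := cc.Jsub
  f _ := cc.f
  f' _ := deriv cc.f
  φ := cc.φ
  c := cc.c
  γ := cc.γ
  b := cc.b
  ordConnected_J := Set.ordConnected_Icc
  isBounded_J := isBounded_Icc 0 1
  ordConnected_I j := by
    obtain ⟨u, v, -, hJ⟩ := cc.hJsub_interval j
    exact hJ ▸ Set.ordConnected_Icc
  I_subset_J := cc.hJsub_sub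
  mapsTo_φ := cc.hφ_maps
  leftInvOn_f_φ := cc.hφ_rinv
  hasDerivWithinAt_f j x hx := (cc.hfdiff j x hx).hasDerivAt.hasDerivWithinAt
  holder_f' := cc.hHolder
  le_abs_f' j x hx := cc.hb.1 ⟨x, Set.mem_iUnion.2 ⟨j, hx⟩, rfl⟩
  c_nonneg := cc.hc.le
  γ_pos := cc.hγ.1
  one_lt_b := cc.hb1

theorem diam_J_toExpandingBranchSystem : diam cc.toExpandingBranchSystem.J = 1 :=
  (Real.diam_Icc zero_le_one).trans (sub_zero 1)

theorem wordMap_toExpandingBranchSystem (σ : List (Fin cc.N)) :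
    cc.toExpandingBranchSystem.wordMap σ = cc.wordMap σ := by
  induction σ with
  | nil => rfl
  | cons j σ ih => exact congrArg (cc.φ j ∘ ·) ih

theorem diam_cylinder_toExpandingBranchSystem (σ : List (Fin cc.N)) :
    diam (cc.toExpandingBranchSystem.cylinder σ) = cc.diamJ σ := by
  rw [ExpandingBranchSystem.cylinder, wordMap_toExpandingBranchSystem]
  rfl

theorem distortionBound_toExpandingBranchSystem :
    cc.toExpandingBranchSystem.distortionBound = cc.xi := by
  rw [ExpandingBranchSystem.distortionBound, diam_J_toExpandingBranchSystem, Real.one_rpow,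
    mul_one]
  rfl

theorem one_le_xi : 1 ≤ cc.xi :=
  cc.distortionBound_toExpandingBranchSystem ▸ cc.toExpandingBranchSystem.one_le_distortionBound

theorem diamJ_mul_diamJ_le_and_diamJ_append_le (σ τ : List (Fin cc.N)) :
    cc.diamJ σ * cc.diamJ τ ≤ cc.xi * cc.diamJ (σ ++ τ) ∧
      cc.diamJ (σ ++ τ) ≤ cc.xi * (cc.diamJ σ * cc.diamJ τ) := by
  simpa only [diam_cylinder_toExpandingBranchSystem, diam_J_toExpandingBranchSystem,
    distortionBound_toExpandingBranchSystem, mul_one] using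
    diam_quasi_multiplicative_general cc.toExpandingBranchSystem σ τ

end CookieCutter

theorem diam_quasi_multiplicative (cc : CookieCutter) :
    ∀ σ τ : List (Fin cc.N), σ ≠ [] → τ ≠ [] →
      (cc.xi ^ 3)⁻¹ * cc.diamJ σ * cc.diamJ τ ≤ cc.diamJ (σ ++ τ) ∧
      cc.diamJ (σ ++ τ) ≤ cc.xi ^ 3 * cc.diamJ σ * cc.diamJ τ := by
  intro σ τ _ _
  have hσ : 0 ≤ cc.diamJ σ := diam_nonneg
  have hτ : 0 ≤ cc.diamJ τ := diam_nonneg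
  have hστ : 0 ≤ cc.diamJ (σ ++ τ) := diam_nonneg
  have hξ := cc.one_le_xi
  have hξ_le : cc.xi ≤ cc.xi ^ 3 := le_self_pow₀ hξ (by norm_num)
  obtain ⟨hlower, hupper⟩ := cc.diamJ_mul_diamJ_le_and_diamJ_append_le σ τ
  rw [mul_assoc, mul_assoc, inv_mul_le_iff₀ (by positivity)]
  exact ⟨hlower.trans (by gcongr), hupper.trans (by gcongr)⟩
end
end

section
/- Existence of a Gibbs-like measure: there exists a constant η > 1, namely η = ξ^{9h}, and a Borel probability measure μ_h on ℝ supported on the cookie-cutter set E such that for every σ ∈ Ω, η^{-1} |J_σ|^h ≤ μ_h(J_σ) ≤ η |J_σ|^h. -/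
open MeasureTheory Filter Metric

noncomputable section

/-!
By the chain rule and the Hölder condition, the derivatives of `φ_σ` at two points of `J` differ at
most by the factor `ξ`, so the weight `‖φ'_σ‖ ^ t` is multiplicative under juxtaposition of words up
to the factor `C = ξ ^ t`. Its sums `u k` over the words of length `k` therefore satisfy
`u (k + m) ≤ u k * u m ≤ C * u (k + m)`, and Fekete's lemma for `u` and for `C / u` traps `u k`
between `e ^ (k P)` and `C e ^ (k P)`, where `P` is the pressure at `t`. Hence, among the words of
length `|σ| + m`, those extending `σ` carry a proportion of the total weight that is comparable to
`e ^ (-P |σ|) ‖φ'_σ‖ ^ t` uniformly in `m`. The sequence space is compact and its cylinders are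
clopen, so the bounds pass to a weak limit of the corresponding random words. The Gibbs measure is
the image of this limit under the coding map, which pulls `J_σ` back to the cylinder of `σ`; the
mean value theorem compares `‖φ'_σ‖` with `|J_σ|`.
-/

section Growth

open Topology

variable {u : ℕ → ℝ} {q C : ℝ}

lemma exp_mul_le_of_submultiplicative (hpos : ∀ k, 0 < u k)
    (hsub : ∀ k m, u (k + m) ≤ u k * u m)
    (hlim : Tendsto (fun k : ℕ => Real.log (u k) / k) atTop (𝓝 q)) (k : ℕ) :
    Real.exp (q * k) ≤ u k := by
  rcases eq_or_ne k 0 with rfl | hk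
  · simpa using (le_mul_iff_one_le_right (hpos 0)).1 (hsub 0 0)
  have hlog : Subadditive fun k => Real.log (u k) := fun m n => by
    rw [← Real.log_mul (hpos m).ne' (hpos n).ne']
    exact Real.log_le_log (hpos _) (hsub m n)
  have hq : q ≤ Real.log (u k) / k := by
    rw [← tendsto_nhds_unique (hlog.tendsto_lim hlim.bddBelow_range) hlim]
    exact hlog.lim_le_div hlim.bddBelow_range hk
  rwa [← Real.le_log_iff_exp_le (hpos k), ← le_div_iff₀ (by positivity)]

lemma le_mul_exp_of_supermultiplicative (hpos : ∀ k, 0 < u k)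
    (hsup : ∀ k m, u k * u m ≤ C * u (k + m))
    (hlim : Tendsto (fun k : ℕ => Real.log (u k) / k) atTop (𝓝 q)) (k : ℕ) :
    u k ≤ C * Real.exp (q * k) := by
  have hC : 0 < C :=
    pos_of_mul_pos_left ((mul_pos (hpos 0) (hpos 0)).trans_le (hsup 0 0)) (hpos _).le
  -- `C / u` is submultiplicative with growth rate `-q`.
  have hsub : ∀ k m, C / u (k + m) ≤ C / u k * (C / u m) := fun k m => by
    rw [div_mul_div_comm, div_le_div_iff₀ (hpos _) (mul_pos (hpos k) (hpos m)), mul_assoc]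
    exact mul_le_mul_of_nonneg_left (hsup k m) hC.le
  have hlim' : Tendsto (fun k : ℕ => Real.log (C / u k) / k) atTop (𝓝 (-q)) := by
    rw [← zero_sub]
    refine ((tendsto_const_div_atTop_nhds_zero_nat (Real.log C)).sub hlim).congr fun k => ?_
    rw [Real.log_div hC.ne' (hpos k).ne', sub_div]
  have hexp := exp_mul_le_of_submultiplicative (fun k => div_pos hC (hpos k)) hsub hlim' k
  rwa [neg_mul, Real.exp_neg, inv_eq_one_div, div_le_div_iff₀ (Real.exp_pos _) (hpos k),
    one_mul] at hexp

end Growth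

section WordSum

variable {α : Type*} [Fintype α]

/-- The sum of `a σ` over the words `σ` of length `n`. For `a σ = ‖φ'_σ‖ ^ t` this is the partition
function whose exponential growth rate is the pressure. -/
def wordSum {M : Type*} [AddCommMonoid M] (a : List α → M) (n : ℕ) : M :=
  ∑ s : Fin n → α, a (List.ofFn s)

lemma wordSum_add {M : Type*} [AddCommMonoid M] (a : List α → M) (k m : ℕ) :
    wordSum a (k + m) = wordSum (fun σ => wordSum (fun τ => a (σ ++ τ)) m) k := by
  simp only [wordSum, ← (Fin.appendEquiv k m).sum_comp, Fintype.sum_prod_type, Fin.appendEquiv,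
    Equiv.coe_fn_mk, List.ofFn_fin_append]

lemma wordSum_le_wordSum {a a' : List α → ℝ} (h : ∀ σ, a σ ≤ a' σ) (n : ℕ) :
    wordSum a n ≤ wordSum a' n :=
  Finset.sum_le_sum fun _ _ => h _

lemma wordSum_pos [Nonempty α] {a : List α → ℝ} (h : ∀ σ, 0 < a σ) (n : ℕ) : 0 < wordSum a n :=
  Finset.sum_pos (fun _ _ => h _) Finset.univ_nonempty

lemma mul_wordSum (c : ℝ) (a : List α → ℝ) (n : ℕ) :
    c * wordSum a n = wordSum (fun σ => c * a σ) n :=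
  Finset.mul_sum ..

lemma wordSum_mul (c : ℝ) (a : List α → ℝ) (n : ℕ) :
    wordSum a n * c = wordSum (fun σ => a σ * c) n :=
  Finset.sum_mul ..

lemma wordSum_eq_single {M : Type*} [AddCommMonoid M] {f : List α → M} (σ : List α)
    (h : ∀ σ', σ'.length = σ.length → σ' ≠ σ → f σ' = 0) : wordSum f σ.length = f σ := by
  rw [wordSum, Fintype.sum_eq_single σ.get, List.ofFn_get]
  intro s hs
  refine h _ (by simp) fun hσ => hs (List.ofFn_injective ?_)
  rw [hσ, List.ofFn_get]

end WordSum

section Gibbs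

open Topology

variable {α : Type*}

/-- A positive weight on words that is multiplicative under juxtaposition up to the factor `C`.
The upper constant is normalized to `1`, which rescaling the weight always achieves. -/
structure IsQuasiMultiplicative (a : List α → ℝ) (C : ℝ) : Prop where
  pos : ∀ σ, 0 < a σ
  append_le : ∀ σ τ, a (σ ++ τ) ≤ a σ * a τ
  mul_le : ∀ σ τ, a σ * a τ ≤ C * a (σ ++ τ)

/-- The proportion of the weight of the words of length `|σ| + m` carried by the words that extend
`σ`. The Gibbs measure of the cylinder of `σ` is a limit of these proportions as `m → ∞`. -/
def extensionRatio [Fintype α] (a : List α → ℝ) (σ : List α) (m : ℕ) : ℝ :=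
  wordSum (fun τ => a (σ ++ τ)) m / wordSum a (σ.length + m)

lemma extensionRatio_pos [Fintype α] [Nonempty α] {a : List α → ℝ} (ha : ∀ σ, 0 < a σ)
    (σ : List α) (m : ℕ) : 0 < extensionRatio a σ m :=
  div_pos (wordSum_pos (fun _ => ha _) m) (wordSum_pos ha _)

namespace IsQuasiMultiplicative

variable {a : List α → ℝ} {C q : ℝ}

lemma const_pos (ha : IsQuasiMultiplicative a C) : 0 < C :=
  pos_of_mul_pos_left ((mul_pos (ha.pos []) (ha.pos [])).trans_le (ha.mul_le [] [])) (ha.pos _).le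

variable [Fintype α]

lemma wordSum_append_le (ha : IsQuasiMultiplicative a C) (σ : List α) (m : ℕ) :
    wordSum (fun τ => a (σ ++ τ)) m ≤ a σ * wordSum a m := by
  rw [mul_wordSum]
  exact wordSum_le_wordSum (ha.append_le σ) m

lemma mul_wordSum_le (ha : IsQuasiMultiplicative a C) (σ : List α) (m : ℕ) :
    a σ * wordSum a m ≤ C * wordSum (fun τ => a (σ ++ τ)) m := by
  rw [mul_wordSum, mul_wordSum]
  exact wordSum_le_wordSum (ha.mul_le σ) m

variable [Nonempty α]

lemma exp_le_wordSum (ha : IsQuasiMultiplicative a C)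
    (hq : Tendsto (fun k : ℕ => Real.log (wordSum a k) / k) atTop (𝓝 q)) (k : ℕ) :
    Real.exp (q * k) ≤ wordSum a k := by
  refine exp_mul_le_of_submultiplicative (wordSum_pos ha.pos) (fun k m => ?_) hq k
  rw [wordSum_add, wordSum_mul]
  exact wordSum_le_wordSum (fun σ => ha.wordSum_append_le σ m) k

lemma wordSum_le_exp (ha : IsQuasiMultiplicative a C)
    (hq : Tendsto (fun k : ℕ => Real.log (wordSum a k) / k) atTop (𝓝 q)) (k : ℕ) :
    wordSum a k ≤ C * Real.exp (q * k) := by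
  refine le_mul_exp_of_supermultiplicative (wordSum_pos ha.pos) (fun k m => ?_) hq k
  rw [wordSum_add, wordSum_mul, mul_wordSum]
  exact wordSum_le_wordSum (fun σ => ha.mul_wordSum_le σ m) k

lemma extensionRatio_le (ha : IsQuasiMultiplicative a C)
    (hq : Tendsto (fun k : ℕ => Real.log (wordSum a k) / k) atTop (𝓝 q)) (σ : List α) (m : ℕ) :
    extensionRatio a σ m ≤ C * (Real.exp (-(q * σ.length)) * a σ) := by
  rw [extensionRatio, div_le_iff₀ (wordSum_pos ha.pos _)]
  have hC := ha.const_pos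
  have hσ := ha.pos σ
  calc wordSum (fun τ => a (σ ++ τ)) m ≤ a σ * wordSum a m := ha.wordSum_append_le σ m
    _ ≤ a σ * (C * Real.exp (q * m)) := by gcongr; exact ha.wordSum_le_exp hq m
    _ = C * (Real.exp (-(q * σ.length)) * a σ) * Real.exp (q * ↑(σ.length + m)) := by
        rw [Nat.cast_add, mul_add, Real.exp_add, Real.exp_neg]
        field_simp
    _ ≤ C * (Real.exp (-(q * σ.length)) * a σ) * wordSum a (σ.length + m) := by
        gcongr; exact ha.exp_le_wordSum hq _

lemma le_extensionRatio (ha : IsQuasiMultiplicative a C)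
    (hq : Tendsto (fun k : ℕ => Real.log (wordSum a k) / k) atTop (𝓝 q)) (σ : List α) (m : ℕ) :
    (C ^ 2)⁻¹ * (Real.exp (-(q * σ.length)) * a σ) ≤ extensionRatio a σ m := by
  rw [extensionRatio, le_div_iff₀ (wordSum_pos ha.pos _)]
  have hC := ha.const_pos
  have hσ := ha.pos σ
  calc (C ^ 2)⁻¹ * (Real.exp (-(q * σ.length)) * a σ) * wordSum a (σ.length + m)
      ≤ (C ^ 2)⁻¹ * (Real.exp (-(q * σ.length)) * a σ) *
          (C * Real.exp (q * ↑(σ.length + m))) := by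
        gcongr; exact ha.wordSum_le_exp hq _
    _ = C⁻¹ * (a σ * Real.exp (q * m)) := by
        rw [Nat.cast_add, mul_add, Real.exp_add, Real.exp_neg]
        field_simp
    _ ≤ C⁻¹ * (a σ * wordSum a m) := by gcongr; exact ha.exp_le_wordSum hq m
    _ ≤ wordSum (fun τ => a (σ ++ τ)) m := inv_mul_le_of_le_mul₀ hC.le
        (Finset.sum_nonneg fun _ _ => (ha.pos _).le) (ha.mul_wordSum_le σ m)

end IsQuasiMultiplicative

/-- The sequences that begin with the word `σ`. -/
def wordCylinder (σ : List α) : Set (ℕ → α) :=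
  {ω | List.ofFn (fun i : Fin σ.length => ω i) = σ}

lemma wordCylinder_nil : wordCylinder ([] : List α) = Set.univ := by
  simp [wordCylinder]

lemma isClopen_wordCylinder [Finite α] [TopologicalSpace α] [DiscreteTopology α] (σ : List α) :
    IsClopen (wordCylinder σ) := by
  have hprefix : Continuous fun (ω : ℕ → α) (i : Fin σ.length) => ω i := by fun_prop
  exact (isClopen_discrete {s : Fin σ.length → α | List.ofFn s = σ}).preimage hprefix

variable [Nonempty α]

/-- The word `σ` continued to an infinite sequence by an arbitrary letter. -/
def padWord (σ : List α) (i : ℕ) : α :=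
  σ.getD i (Classical.arbitrary α)

lemma padWord_append_mem_wordCylinder_iff {σ σ' : List α} (hl : σ'.length = σ.length)
    (τ : List α) : padWord (σ' ++ τ) ∈ wordCylinder σ ↔ σ' = σ := by
  suffices List.ofFn (fun i : Fin σ.length => padWord (σ' ++ τ) i) = σ' by
    rw [wordCylinder, Set.mem_ofPred_eq, this]
  refine List.ext_getElem (by simp [hl]) fun i _ hi => ?_
  simp [padWord, List.getElem?_append_left hi, List.getElem?_eq_getElem hi]

variable [Fintype α] [MeasurableSpace α]

/-- The law of a random word of length `n`, drawn with probability proportional to `a` and padded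
to an infinite sequence. -/
def wordMeasure (a : List α → ℝ) (n : ℕ) : Measure (ℕ → α) :=
  wordSum (fun σ => ENNReal.ofReal (a σ / wordSum a n) • Measure.dirac (padWord σ)) n

lemma wordMeasure_apply (a : List α → ℝ) (n : ℕ) {S : Set (ℕ → α)} (hS : MeasurableSet S) :
    wordMeasure a n S =
      wordSum (fun σ => ENNReal.ofReal (a σ / wordSum a n) * S.indicator 1 (padWord σ)) n := by
  simp only [wordMeasure, wordSum, Measure.finsetSum_apply, Measure.smul_apply,
    Measure.dirac_apply' _ hS, smul_eq_mul]

variable [TopologicalSpace α] [DiscreteTopology α] [BorelSpace α] {a : List α → ℝ}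

lemma wordMeasure_wordCylinder (ha : ∀ σ, 0 < a σ) (σ : List α) (m : ℕ) :
    wordMeasure a (σ.length + m) (wordCylinder σ) = ENNReal.ofReal (extensionRatio a σ m) := by
  rw [wordMeasure_apply _ _ (isClopen_wordCylinder σ).isOpen.measurableSet, wordSum_add,
    wordSum_eq_single σ, extensionRatio]
  · simp only [Set.indicator_of_mem ((padWord_append_mem_wordCylinder_iff rfl _).2 rfl),
      Pi.one_apply, mul_one, wordSum, Finset.sum_div]
    exact (ENNReal.ofReal_sum_of_nonneg fun _ _ => (div_pos (ha _) (wordSum_pos ha _)).le).symm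
  · intro σ' hl hσ'
    refine Finset.sum_eq_zero fun s _ => ?_
    have hpad := mt (padWord_append_mem_wordCylinder_iff hl (List.ofFn s)).1 hσ'
    exact mul_eq_zero_of_right _ (Set.indicator_of_notMem hpad _)

lemma isProbabilityMeasure_wordMeasure (ha : ∀ σ, 0 < a σ) (n : ℕ) :
    IsProbabilityMeasure (wordMeasure a n) where
  measure_univ := by
    have h := wordMeasure_wordCylinder ha [] n
    simpa [wordCylinder_nil, extensionRatio, div_self (wordSum_pos ha n).ne'] using h

lemma exists_measure_wordCylinder_mem (ha : ∀ σ, 0 < a σ) {K : List α → Set ℝ}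
    (hK : ∀ σ, IsClosed (K σ)) (hmem : ∀ σ m, extensionRatio a σ m ∈ K σ) :
    ∃ ν : Measure (ℕ → α), IsProbabilityMeasure ν ∧ ∀ σ, ν.real (wordCylinder σ) ∈ K σ := by
  let ν n : ProbabilityMeasure (ℕ → α) := ⟨wordMeasure a n, isProbabilityMeasure_wordMeasure ha n⟩
  obtain ⟨μ, -, hμ⟩ := isCompact_univ.exists_mapClusterPt (f := atTop) (u := ν) (by simp)
  obtain ⟨U, hU, hlim⟩ := mapClusterPt_iff_ultrafilter.1 hμ
  refine ⟨μ, inferInstance, fun σ => ?_⟩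
  have hcyl : Tendsto (fun n => (wordMeasure a n).real (wordCylinder σ)) U
      (𝓝 ((μ : Measure (ℕ → α)).real (wordCylinder σ))) :=
    (ENNReal.tendsto_toReal (measure_ne_top _ _)).comp
      (ProbabilityMeasure.tendsto_measure_of_null_frontier_of_tendsto' hlim
        (by simp [(isClopen_wordCylinder σ).frontier_eq]))
  refine (hK σ).mem_of_tendsto hcyl ?_
  filter_upwards [hU (eventually_ge_atTop σ.length)] with n hn
  obtain ⟨m, rfl⟩ := Nat.exists_eq_add_of_le hn
  rw [measureReal_def, wordMeasure_wordCylinder ha,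
    ENNReal.toReal_ofReal (extensionRatio_pos ha σ m).le]
  exact hmem σ m

theorem IsQuasiMultiplicative.exists_gibbsMeasure {C q : ℝ} (ha : IsQuasiMultiplicative a C)
    (hq : Tendsto (fun k : ℕ => Real.log (wordSum a k) / k) atTop (𝓝 q)) :
    ∃ ν : Measure (ℕ → α), IsProbabilityMeasure ν ∧ ∀ σ, ν.real (wordCylinder σ) ∈
      Set.Icc ((C ^ 2)⁻¹ * (Real.exp (-(q * σ.length)) * a σ))
        (C * (Real.exp (-(q * σ.length)) * a σ)) :=
  exists_measure_wordCylinder_mem ha.pos (fun _ => isClosed_Icc)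
    fun σ m => ⟨ha.le_extensionRatio hq σ m, ha.extensionRatio_le hq σ m⟩

end Gibbs

lemma reverse_piNat_res {α : Type*} (ω : ℕ → α) (n : ℕ) :
    (PiNat.res ω n).reverse = List.ofFn fun i : Fin n => ω i := by
  induction n with
  | zero => simp
  | succ n ih =>
    rw [PiNat.res_succ, List.reverse_cons, ih, List.ofFn_succ_last]
    simp only [Fin.val_castSucc, Fin.val_last]

namespace CookieCutter

variable (cc : CookieCutter)

section WordMap

lemma φ_mem_Icc (j : Fin cc.N) {x : ℝ} (hx : x ∈ Set.Icc 0 1) : cc.φ j x ∈ Set.Icc 0 1 :=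
  cc.hJsub_sub j (cc.hφ_maps j x hx)

lemma wordMap_mem_Icc (σ : List (Fin cc.N)) {x : ℝ} (hx : x ∈ Set.Icc 0 1) :
    cc.wordMap σ x ∈ Set.Icc 0 1 := by
  induction σ with
  | nil => exact hx
  | cons j σ ih => exact cc.φ_mem_Icc j ih

lemma wordMap_append (σ τ : List (Fin cc.N)) :
    cc.wordMap (σ ++ τ) = cc.wordMap σ ∘ cc.wordMap τ := by
  induction σ with
  | nil => rfl
  | cons j σ ih => rw [List.cons_append, wordMap, ih, wordMap, Function.comp_assoc]

lemma eq_of_φ_eq {i j : Fin cc.N} {x y : ℝ} (hx : x ∈ Set.Icc 0 1) (hy : y ∈ Set.Icc 0 1)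
    (h : cc.φ i x = cc.φ j y) : i = j ∧ x = y := by
  have hxy : x = y := by rw [← cc.hφ_rinv i x hx, h, cc.hφ_rinv j y hy]
  refine ⟨by_contra fun hij => ?_, hxy⟩
  exact Set.disjoint_left.1 (cc.hJsub_disj i j hij) (cc.hφ_maps i x hx) (h ▸ cc.hφ_maps j y hy)

lemma eq_of_wordMap_eq {σ τ : List (Fin cc.N)} (hl : σ.length = τ.length) {x y : ℝ}
    (hx : x ∈ Set.Icc 0 1) (hy : y ∈ Set.Icc 0 1)
    (hxy : cc.wordMap σ x = cc.wordMap τ y) : σ = τ := by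
  induction σ generalizing τ with
  | nil => exact (List.length_eq_zero_iff.1 hl.symm).symm
  | cons i σ ih =>
    obtain ⟨j, τ, rfl⟩ := List.exists_cons_of_length_eq_add_one hl.symm
    obtain ⟨rfl, h⟩ := cc.eq_of_φ_eq (cc.wordMap_mem_Icc σ hx) (cc.wordMap_mem_Icc τ hy) hxy
    rw [ih (Nat.succ_injective hl) h]

lemma differentiableAt_wordMap (σ : List (Fin cc.N)) {x : ℝ} (hx : x ∈ Set.Icc 0 1) :
    DifferentiableAt ℝ (cc.wordMap σ) x := by
  induction σ with
  | nil => exact differentiableAt_id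
  | cons j σ ih => exact (cc.hφdiff j _ (cc.wordMap_mem_Icc σ hx)).comp x ih

lemma continuousOn_wordMap (σ : List (Fin cc.N)) : ContinuousOn (cc.wordMap σ) (Set.Icc 0 1) :=
  fun _ hx => (cc.differentiableAt_wordMap σ hx).continuousAt.continuousWithinAt

lemma deriv_wordMap_append (σ τ : List (Fin cc.N)) {x : ℝ} (hx : x ∈ Set.Icc 0 1) :
    deriv (cc.wordMap (σ ++ τ)) x =
      deriv (cc.wordMap σ) (cc.wordMap τ x) * deriv (cc.wordMap τ) x := by
  rw [wordMap_append]
  exact deriv_comp x (cc.differentiableAt_wordMap σ (cc.wordMap_mem_Icc τ hx))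
    (cc.differentiableAt_wordMap τ hx)

lemma deriv_wordMap_cons (j : Fin cc.N) (σ : List (Fin cc.N)) {x : ℝ} (hx : x ∈ Set.Icc 0 1) :
    deriv (cc.wordMap (j :: σ)) x =
      deriv (cc.φ j) (cc.wordMap σ x) * deriv (cc.wordMap σ) x :=
  cc.deriv_wordMap_append [j] σ hx

end WordMap

section Contraction

lemma b_pos : 0 < cc.b := zero_lt_one.trans cc.hb1

lemma b_le_abs_deriv_f (j : Fin cc.N) {x : ℝ} (hx : x ∈ Set.Icc 0 1) :
    cc.b ≤ |deriv cc.f (cc.φ j x)| :=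
  cc.hb.1 ⟨_, Set.mem_iUnion.2 ⟨j, cc.hφ_maps j x hx⟩, rfl⟩

lemma deriv_f_mul_deriv_φ (j : Fin cc.N) {x : ℝ} (hx : x ∈ Set.Icc 0 1) :
    deriv cc.f (cc.φ j x) * deriv (cc.φ j) x = 1 := by
  have hchain : HasDerivWithinAt (cc.f ∘ cc.φ j)
      (deriv cc.f (cc.φ j x) * deriv (cc.φ j) x) (Set.Icc 0 1) x :=
    ((cc.hfdiff j _ (cc.hφ_maps j x hx)).hasDerivAt.comp x
      (cc.hφdiff j x hx).hasDerivAt).hasDerivWithinAt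
  have hid : HasDerivWithinAt (cc.f ∘ cc.φ j) 1 (Set.Icc 0 1) x :=
    (hasDerivWithinAt_id x _).congr (cc.hφ_rinv j) (cc.hφ_rinv j x hx)
  exact (uniqueDiffOn_Icc zero_lt_one x hx).eq_deriv _ hchain hid

lemma abs_deriv_φ_eq (j : Fin cc.N) {x : ℝ} (hx : x ∈ Set.Icc 0 1) :
    |deriv (cc.φ j) x| = |deriv cc.f (cc.φ j x)|⁻¹ := by
  refine eq_inv_of_mul_eq_one_right ?_
  rw [← abs_mul, cc.deriv_f_mul_deriv_φ j hx, abs_one]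

lemma abs_deriv_φ_le (j : Fin cc.N) {x : ℝ} (hx : x ∈ Set.Icc 0 1) :
    |deriv (cc.φ j) x| ≤ cc.b⁻¹ := by
  rw [cc.abs_deriv_φ_eq j hx]
  exact inv_anti₀ cc.b_pos (cc.b_le_abs_deriv_f j hx)

lemma deriv_wordMap_ne_zero (σ : List (Fin cc.N)) {x : ℝ} (hx : x ∈ Set.Icc 0 1) :
    deriv (cc.wordMap σ) x ≠ 0 := by
  induction σ with
  | nil => simp [wordMap]
  | cons j σ ih =>
    rw [cc.deriv_wordMap_cons j σ hx]
    have hφ := cc.deriv_f_mul_deriv_φ j (cc.wordMap_mem_Icc σ hx)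
    exact mul_ne_zero (right_ne_zero_of_mul_eq_one hφ) ih

lemma abs_φ_sub_le (j : Fin cc.N) {x y : ℝ} (hx : x ∈ Set.Icc 0 1) (hy : y ∈ Set.Icc 0 1) :
    |cc.φ j x - cc.φ j y| ≤ cc.b⁻¹ * |x - y| :=
  (convex_Icc 0 1).norm_image_sub_le_of_norm_deriv_le (cc.hφdiff j)
    (fun _ hz => cc.abs_deriv_φ_le j hz) hy hx

lemma abs_wordMap_sub_le (σ : List (Fin cc.N)) {x y : ℝ} (hx : x ∈ Set.Icc 0 1)
    (hy : y ∈ Set.Icc 0 1) :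
    |cc.wordMap σ x - cc.wordMap σ y| ≤ cc.b⁻¹ ^ σ.length := by
  induction σ with
  | nil => simpa [wordMap, Real.dist_eq] using Real.dist_le_of_mem_Icc_01 hx hy
  | cons j σ ih =>
    calc |cc.wordMap (j :: σ) x - cc.wordMap (j :: σ) y|
        ≤ cc.b⁻¹ * |cc.wordMap σ x - cc.wordMap σ y| :=
          cc.abs_φ_sub_le j (cc.wordMap_mem_Icc σ hx) (cc.wordMap_mem_Icc σ hy)
      _ ≤ cc.b⁻¹ * cc.b⁻¹ ^ σ.length :=
          mul_le_mul_of_nonneg_left ih (inv_nonneg.2 cc.b_pos.le)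
      _ = cc.b⁻¹ ^ (j :: σ).length := (pow_succ' ..).symm

end Contraction

section Distortion

lemma one_lt_b_rpow : 1 < cc.b ^ cc.γ := Real.one_lt_rpow cc.hb1 cc.hγ.1

lemma one_lt_xi : 1 < cc.xi :=
  Real.one_lt_exp_iff.2 (div_pos cc.hc (sub_pos.2 cc.one_lt_b_rpow))

lemma xi_pos : 0 < cc.xi := Real.exp_pos _

lemma abs_deriv_φ_le_exp_mul (j : Fin cc.N) {x y : ℝ} (hx : x ∈ Set.Icc 0 1)
    (hy : y ∈ Set.Icc 0 1) :
    |deriv (cc.φ j) x| ≤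
      Real.exp (cc.c * |cc.φ j x - cc.φ j y| ^ cc.γ) * |deriv (cc.φ j) y| := by
  rw [cc.abs_deriv_φ_eq j hx, cc.abs_deriv_φ_eq j hy]
  have hu := cc.b_le_abs_deriv_f j hx
  have hv := cc.b_le_abs_deriv_f j hy
  have hHolder := cc.hHolder j _ (cc.hφ_maps j y hy) _ (cc.hφ_maps j x hx)
  rw [abs_sub_comm (cc.φ j y)] at hHolder
  set u := deriv cc.f (cc.φ j x)
  set v := deriv cc.f (cc.φ j y)
  set d := cc.c * |cc.φ j x - cc.φ j y| ^ cc.γ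
  have hd : 0 ≤ d := (abs_nonneg _).trans hHolder
  have hu_one : 1 ≤ |u| := cc.hb1.le.trans hu
  rw [← div_eq_mul_inv, inv_eq_one_div,
    div_le_div_iff₀ (cc.b_pos.trans_le hu) (cc.b_pos.trans_le hv), one_mul]
  calc |v| ≤ d + |u| := by linarith [abs_sub_abs_le_abs_sub v u]
    _ ≤ (d + 1) * |u| := by linarith [le_mul_of_one_le_right hd hu_one]
    _ ≤ Real.exp d * |u| := by gcongr; exact Real.add_one_le_exp d

lemma abs_wordMap_sub_rpow_le (σ : List (Fin cc.N)) {x y : ℝ} (hx : x ∈ Set.Icc 0 1)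
    (hy : y ∈ Set.Icc 0 1) :
    |cc.wordMap σ x - cc.wordMap σ y| ^ cc.γ ≤ (cc.b ^ cc.γ)⁻¹ ^ σ.length :=
  calc |cc.wordMap σ x - cc.wordMap σ y| ^ cc.γ ≤ (cc.b⁻¹ ^ σ.length) ^ cc.γ :=
        Real.rpow_le_rpow (abs_nonneg _) (cc.abs_wordMap_sub_le σ hx hy) cc.hγ.1.le
    _ = (cc.b ^ cc.γ)⁻¹ ^ σ.length := by
        rw [← Real.rpow_pow_comm (inv_nonneg.2 cc.b_pos.le), Real.inv_rpow cc.b_pos.le]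

lemma abs_deriv_wordMap_le_exp_mul (σ : List (Fin cc.N)) {x y : ℝ} (hx : x ∈ Set.Icc 0 1)
    (hy : y ∈ Set.Icc 0 1) :
    |deriv (cc.wordMap σ) x| ≤
      Real.exp (cc.c * ∑ i ∈ Finset.Ico 1 (σ.length + 1), (cc.b ^ cc.γ)⁻¹ ^ i) *
        |deriv (cc.wordMap σ) y| := by
  induction σ with
  | nil => simp [wordMap]
  | cons j σ ih =>
    have hφ : |deriv (cc.φ j) (cc.wordMap σ x)| ≤
        Real.exp (cc.c * (cc.b ^ cc.γ)⁻¹ ^ (σ.length + 1)) *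
          |deriv (cc.φ j) (cc.wordMap σ y)| := by
      refine (cc.abs_deriv_φ_le_exp_mul j (cc.wordMap_mem_Icc σ hx)
        (cc.wordMap_mem_Icc σ hy)).trans ?_
      have hc := cc.hc.le
      gcongr
      exact cc.abs_wordMap_sub_rpow_le (j :: σ) hx hy
    rw [cc.deriv_wordMap_cons j σ hx, cc.deriv_wordMap_cons j σ hy, abs_mul, abs_mul,
      List.length_cons, Finset.sum_Ico_succ_top (by simp), mul_add, add_comm, Real.exp_add,
      mul_mul_mul_comm]
    exact mul_le_mul hφ ih (abs_nonneg _) (by positivity)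

lemma abs_deriv_wordMap_le_xi_mul (σ : List (Fin cc.N)) {x y : ℝ} (hx : x ∈ Set.Icc 0 1)
    (hy : y ∈ Set.Icc 0 1) :
    |deriv (cc.wordMap σ) x| ≤ cc.xi * |deriv (cc.wordMap σ) y| := by
  have hb := cc.one_lt_b_rpow
  have hgeom : ∑ i ∈ Finset.Ico 1 (σ.length + 1), (cc.b ^ cc.γ)⁻¹ ^ i ≤ (cc.b ^ cc.γ - 1)⁻¹ :=
    (geom_sum_Ico_le_of_lt_one (by positivity) (inv_lt_one_of_one_lt₀ hb)).trans_eq (by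
      have : cc.b ^ cc.γ - 1 ≠ 0 := by linarith
      field_simp)
  refine (cc.abs_deriv_wordMap_le_exp_mul σ hx hy).trans ?_
  rw [xi, div_eq_mul_inv]
  have hc := cc.hc.le
  gcongr

end Distortion

section NormDeriv

lemma abs_deriv_le_φnorm (σ : List (Fin cc.N)) {x : ℝ} (hx : x ∈ Set.Icc 0 1) :
    |deriv (cc.wordMap σ) x| ≤ cc.φnorm σ := by
  refine le_csSup ⟨cc.xi * |deriv (cc.wordMap σ) 0|, ?_⟩ (Set.mem_image_of_mem _ hx)
  exact Set.forall_mem_image.2 fun y hy => cc.abs_deriv_wordMap_le_xi_mul σ hy (by simp)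

lemma φnorm_le_of_forall (σ : List (Fin cc.N)) {C : ℝ}
    (hC : ∀ x ∈ Set.Icc 0 1, |deriv (cc.wordMap σ) x| ≤ C) : cc.φnorm σ ≤ C :=
  csSup_le ((Set.nonempty_Icc.2 zero_le_one).image _) (Set.forall_mem_image.2 hC)

lemma φnorm_le_xi_mul (σ : List (Fin cc.N)) {x : ℝ} (hx : x ∈ Set.Icc 0 1) :
    cc.φnorm σ ≤ cc.xi * |deriv (cc.wordMap σ) x| :=
  cc.φnorm_le_of_forall σ fun _ hy => cc.abs_deriv_wordMap_le_xi_mul σ hy hx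

lemma φnorm_pos (σ : List (Fin cc.N)) : 0 < cc.φnorm σ :=
  (abs_pos.2 (cc.deriv_wordMap_ne_zero σ (x := 0) (by simp))).trans_le
    (cc.abs_deriv_le_φnorm σ (by simp))

lemma φnorm_append_le (σ τ : List (Fin cc.N)) :
    cc.φnorm (σ ++ τ) ≤ cc.φnorm σ * cc.φnorm τ := by
  refine cc.φnorm_le_of_forall _ fun x hx => ?_
  rw [cc.deriv_wordMap_append σ τ hx, abs_mul]
  exact mul_le_mul (cc.abs_deriv_le_φnorm σ (cc.wordMap_mem_Icc τ hx))
    (cc.abs_deriv_le_φnorm τ hx) (abs_nonneg _) (cc.φnorm_pos σ).le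

lemma φnorm_mul_le (σ τ : List (Fin cc.N)) :
    cc.φnorm σ * cc.φnorm τ ≤ cc.xi * cc.φnorm (σ ++ τ) := by
  have hσ := cc.φnorm_pos σ
  rw [← le_div_iff₀' hσ]
  refine cc.φnorm_le_of_forall _ fun x hx => ?_
  rw [le_div_iff₀' hσ]
  calc cc.φnorm σ * |deriv (cc.wordMap τ) x|
      ≤ cc.xi * |deriv (cc.wordMap σ) (cc.wordMap τ x)| * |deriv (cc.wordMap τ) x| := by
        gcongr
        exact cc.φnorm_le_xi_mul σ (cc.wordMap_mem_Icc τ hx)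
    _ = cc.xi * |deriv (cc.wordMap (σ ++ τ)) x| := by
        rw [cc.deriv_wordMap_append σ τ hx, abs_mul, mul_assoc]
    _ ≤ cc.xi * cc.φnorm (σ ++ τ) :=
        mul_le_mul_of_nonneg_left (cc.abs_deriv_le_φnorm _ hx) cc.xi_pos.le

lemma isQuasiMultiplicative_φnorm_rpow {t : ℝ} (ht : 0 ≤ t) :
    IsQuasiMultiplicative (fun σ => cc.φnorm σ ^ t) (cc.xi ^ t) where
  pos σ := Real.rpow_pos_of_pos (cc.φnorm_pos σ) t
  append_le σ τ := by
    rw [← Real.mul_rpow (cc.φnorm_pos σ).le (cc.φnorm_pos τ).le]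
    exact Real.rpow_le_rpow (cc.φnorm_pos _).le (cc.φnorm_append_le σ τ) ht
  mul_le σ τ := by
    rw [← Real.mul_rpow (cc.φnorm_pos σ).le (cc.φnorm_pos τ).le,
      ← Real.mul_rpow cc.xi_pos.le (cc.φnorm_pos _).le]
    exact Real.rpow_le_rpow (mul_pos (cc.φnorm_pos σ) (cc.φnorm_pos τ)).le
      (cc.φnorm_mul_le σ τ) ht

end NormDeriv

section BasicInterval

lemma nonempty_Jc (σ : List (Fin cc.N)) : (cc.Jc σ).Nonempty :=
  (Set.nonempty_Icc.2 zero_le_one).image _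

lemma isCompact_Jc (σ : List (Fin cc.N)) : IsCompact (cc.Jc σ) :=
  isCompact_Icc.image_of_continuousOn (cc.continuousOn_wordMap σ)

lemma measurableSet_E : MeasurableSet cc.E :=
  .iInter fun _ => .iInter fun _ => .iUnion fun _ => (cc.isCompact_Jc _).measurableSet

lemma Jc_append_subset (σ τ : List (Fin cc.N)) : cc.Jc (σ ++ τ) ⊆ cc.Jc σ := by
  rw [Jc, wordMap_append, Set.image_comp]
  exact Set.image_mono (Set.image_subset_iff.2 fun _ => cc.wordMap_mem_Icc τ)

lemma ediam_Jc_le (σ : List (Fin cc.N)) :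
    Metric.ediam (cc.Jc σ) ≤ ENNReal.ofReal (cc.b⁻¹ ^ σ.length) := by
  refine Metric.ediam_le ?_
  rintro _ ⟨x, hx, rfl⟩ _ ⟨y, hy, rfl⟩
  rw [edist_dist]
  exact ENNReal.ofReal_le_ofReal (cc.abs_wordMap_sub_le σ hx hy)

lemma diamJ_le_φnorm (σ : List (Fin cc.N)) : cc.diamJ σ ≤ cc.φnorm σ := by
  refine Metric.diam_le_of_forall_dist_le (cc.φnorm_pos σ).le ?_
  rintro _ ⟨x, hx, rfl⟩ _ ⟨y, hy, rfl⟩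
  calc dist (cc.wordMap σ x) (cc.wordMap σ y) ≤ cc.φnorm σ * ‖x - y‖ :=
        (convex_Icc 0 1).norm_image_sub_le_of_norm_deriv_le
          (fun _ hz => cc.differentiableAt_wordMap σ hz)
          (fun _ hz => cc.abs_deriv_le_φnorm σ hz) hy hx
    _ ≤ cc.φnorm σ :=
        mul_le_of_le_one_right (cc.φnorm_pos σ).le (Real.dist_le_of_mem_Icc_01 hx hy)

lemma φnorm_le_xi_mul_diamJ (σ : List (Fin cc.N)) : cc.φnorm σ ≤ cc.xi * cc.diamJ σ := by
  obtain ⟨z, hz, hslope⟩ := exists_deriv_eq_slope (cc.wordMap σ) zero_lt_one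
    (cc.continuousOn_wordMap σ) fun x hx =>
      (cc.differentiableAt_wordMap σ (Set.Ioo_subset_Icc_self hx)).differentiableWithinAt
  rw [sub_zero, div_one] at hslope
  calc cc.φnorm σ ≤ cc.xi * |deriv (cc.wordMap σ) z| :=
        cc.φnorm_le_xi_mul σ (Set.Ioo_subset_Icc_self hz)
    _ = cc.xi * dist (cc.wordMap σ 1) (cc.wordMap σ 0) := by rw [hslope, Real.dist_eq]
    _ ≤ cc.xi * cc.diamJ σ := mul_le_mul_of_nonneg_left
        (Metric.dist_le_diam_of_mem (cc.isCompact_Jc σ).isBounded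
          (Set.mem_image_of_mem _ (by simp)) (Set.mem_image_of_mem _ (by simp))) cc.xi_pos.le

lemma diamJ_nonneg (σ : List (Fin cc.N)) : 0 ≤ cc.diamJ σ := Metric.diam_nonneg

lemma φnorm_rpow_le (σ : List (Fin cc.N)) {t : ℝ} (ht : 0 ≤ t) :
    cc.φnorm σ ^ t ≤ cc.xi ^ t * cc.diamJ σ ^ t := by
  rw [← Real.mul_rpow cc.xi_pos.le (cc.diamJ_nonneg σ)]
  exact Real.rpow_le_rpow (cc.φnorm_pos σ).le (cc.φnorm_le_xi_mul_diamJ σ) ht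

lemma eq_of_mem_Jc {σ τ : List (Fin cc.N)} (hl : σ.length = τ.length) {x : ℝ}
    (hσ : x ∈ cc.Jc σ) (hτ : x ∈ cc.Jc τ) : σ = τ := by
  obtain ⟨y, hy, rfl⟩ := hσ
  obtain ⟨z, hz, hyz⟩ := hτ
  exact cc.eq_of_wordMap_eq hl hy hz hyz.symm

end BasicInterval

section Coding

open Topology

/-- The basic intervals as a Cantor scheme. The words are reversed because a `CantorScheme` lists
the most recent letter first. -/
def cantorScheme (l : List (Fin cc.N)) : Set ℝ := cc.Jc l.reverse

lemma vanishingDiam_cantorScheme : CantorScheme.VanishingDiam cc.cantorScheme := by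
  intro ω
  have hpow : Tendsto (fun n : ℕ => ENNReal.ofReal (cc.b⁻¹ ^ n)) atTop (𝓝 0) := by
    rw [← ENNReal.ofReal_zero]
    exact ENNReal.tendsto_ofReal (tendsto_pow_atTop_nhds_zero_of_lt_one
      (inv_nonneg.2 cc.b_pos.le) (inv_lt_one_of_one_lt₀ cc.hb1))
  refine tendsto_of_tendsto_of_tendsto_of_le_of_le tendsto_const_nhds hpow
    (fun _ => zero_le) fun n => ?_
  exact (cc.ediam_Jc_le _).trans_eq (by rw [List.length_reverse, PiNat.res_length])

lemma closureAntitone_cantorScheme : CantorScheme.ClosureAntitone cc.cantorScheme := by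
  refine CantorScheme.Antitone.closureAntitone (fun l j => ?_)
    fun l => (cc.isCompact_Jc _).isClosed
  rw [cantorScheme, List.reverse_cons]
  exact cc.Jc_append_subset l.reverse [j]

lemma inducedMap_cantorScheme_dom : (CantorScheme.inducedMap cc.cantorScheme).1 = Set.univ :=
  cc.closureAntitone_cantorScheme.map_of_vanishingDiam cc.vanishingDiam_cantorScheme
    fun _ => cc.nonempty_Jc _

/-- The coding map, which sends a sequence `ω` to the point common to all the basic intervals
`J_{ω_1 ⋯ ω_n}`. -/
def coding (ω : ℕ → Fin cc.N) : ℝ :=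
  (CantorScheme.inducedMap cc.cantorScheme).2
    ⟨ω, cc.inducedMap_cantorScheme_dom ▸ Set.mem_univ ω⟩

lemma continuous_coding : Continuous cc.coding :=
  cc.vanishingDiam_cantorScheme.map_continuous.comp (continuous_id.subtype_mk _)

lemma coding_mem_Jc (ω : ℕ → Fin cc.N) (n : ℕ) :
    cc.coding ω ∈ cc.Jc (List.ofFn fun i : Fin n => ω i) := by
  rw [← reverse_piNat_res]
  exact CantorScheme.map_mem _ n

lemma coding_mem_E (ω : ℕ → Fin cc.N) : cc.coding ω ∈ cc.E :=
  Set.mem_iInter₂.2 fun n _ => Set.mem_iUnion.2 ⟨fun i => ω i, cc.coding_mem_Jc ω n⟩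

lemma coding_preimage_Jc (σ : List (Fin cc.N)) : cc.coding ⁻¹' cc.Jc σ = wordCylinder σ := by
  ext ω
  have hprefix := cc.coding_mem_Jc ω σ.length
  exact ⟨fun hω => cc.eq_of_mem_Jc (by simp) hprefix hω,
    fun hω : List.ofFn _ = σ => hω ▸ hprefix⟩

lemma map_coding_compl_E (ν : Measure (ℕ → Fin cc.N)) : ν.map cc.coding cc.Eᶜ = 0 := by
  rw [Measure.map_apply cc.continuous_coding.measurable cc.measurableSet_E.compl,
    Set.preimage_compl, Set.preimage_eq_univ_iff.2 (Set.range_subset_iff.2 cc.coding_mem_E),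
    Set.compl_univ, measure_empty]

lemma map_coding_real_Jc (ν : Measure (ℕ → Fin cc.N)) (σ : List (Fin cc.N)) :
    (ν.map cc.coding).real (cc.Jc σ) = ν.real (wordCylinder σ) := by
  rw [map_measureReal_apply cc.continuous_coding.measurable (cc.isCompact_Jc σ).measurableSet,
    cc.coding_preimage_Jc]

end Coding

section GibbsMeasure

/-- A Borel probability measure on the cookie-cutter set for which `J_σ` has mass
`e^{-P|σ|} |J_σ|^t` up to the factor `η`: the Gibbs property for the potential `-t log |f'|`, whose
pressure is `P`. -/
structure IsGibbsMeasure (t P η : ℝ) (μ : Measure ℝ) : Prop where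
  isProbabilityMeasure : IsProbabilityMeasure μ
  measure_compl_E : μ cc.Eᶜ = 0
  le_measure_Jc : ∀ σ, η⁻¹ * (Real.exp (-(P * σ.length)) * cc.diamJ σ ^ t) ≤ μ.real (cc.Jc σ)
  measure_Jc_le : ∀ σ, μ.real (cc.Jc σ) ≤ η * (Real.exp (-(P * σ.length)) * cc.diamJ σ ^ t)

variable {cc}

lemma IsGibbsMeasure.mono {t P η η' : ℝ} {μ : Measure ℝ} (hμ : cc.IsGibbsMeasure t P η μ)
    (hη : 0 < η) (h : η ≤ η') : cc.IsGibbsMeasure t P η' μ := by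
  have hdiam σ : 0 ≤ cc.diamJ σ ^ t := Real.rpow_nonneg (cc.diamJ_nonneg σ) t
  refine ⟨hμ.isProbabilityMeasure, hμ.measure_compl_E, fun σ => ?_, fun σ => ?_⟩
  · refine le_trans ?_ (hμ.le_measure_Jc σ)
    have := hdiam σ
    gcongr
  · refine (hμ.measure_Jc_le σ).trans ?_
    have := hdiam σ
    gcongr

end GibbsMeasure

end CookieCutter

theorem gibbs_like_measure_exists_general (cc : CookieCutter) {t P : ℝ} (ht : 0 ≤ t)
    (hP : Tendsto (fun k : ℕ => (1 / (k : ℝ)) * Real.log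
        (∑ σ : Fin k → Fin cc.N, cc.φnorm (List.ofFn σ) ^ t)) atTop (nhds P)) :
    ∃ μ : Measure ℝ, cc.IsGibbsMeasure t P (cc.xi ^ (2 * t)) μ := by
  have : Nonempty (Fin cc.N) := ⟨⟨0, two_pos.trans_le cc.hN⟩⟩
  obtain ⟨ν, hν, hcyl⟩ := (cc.isQuasiMultiplicative_φnorm_rpow ht).exists_gibbsMeasure
    (by simpa only [wordSum, one_div_mul_eq_div] using hP)
  have hxi : cc.xi ^ (2 * t) = (cc.xi ^ t) ^ 2 := by
    rw [mul_comm, Real.rpow_mul cc.xi_pos.le, Real.rpow_two]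
  have hxi_pos := Real.rpow_pos_of_pos cc.xi_pos t
  refine ⟨ν.map cc.coding, Measure.isProbabilityMeasure_map
    cc.continuous_coding.measurable.aemeasurable, cc.map_coding_compl_E ν, fun σ => ?_,
    fun σ => ?_⟩ <;> rw [cc.map_coding_real_Jc, hxi]
  · calc ((cc.xi ^ t) ^ 2)⁻¹ * (Real.exp (-(P * σ.length)) * cc.diamJ σ ^ t)
        ≤ ((cc.xi ^ t) ^ 2)⁻¹ * (Real.exp (-(P * σ.length)) * cc.φnorm σ ^ t) := by
          gcongr
          exacts [cc.diamJ_nonneg σ, cc.diamJ_le_φnorm σ]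
      _ ≤ ν.real (wordCylinder σ) := (hcyl σ).1
  · calc ν.real (wordCylinder σ)
        ≤ cc.xi ^ t * (Real.exp (-(P * σ.length)) * cc.φnorm σ ^ t) := (hcyl σ).2
      _ ≤ cc.xi ^ t * (Real.exp (-(P * σ.length)) * (cc.xi ^ t * cc.diamJ σ ^ t)) := by
          gcongr
          exact cc.φnorm_rpow_le σ ht
      _ = (cc.xi ^ t) ^ 2 * (Real.exp (-(P * σ.length)) * cc.diamJ σ ^ t) := by ring

theorem gibbs_like_measure_exists (cc : CookieCutter) (Q : ℝ → ℝ)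
    (hQ : ∀ t : ℝ, Filter.Tendsto
      (fun k : ℕ => (1 / (k : ℝ)) * Real.log
        (∑ σ : Fin k → Fin cc.N, cc.φnorm (List.ofFn σ) ^ t))
      Filter.atTop (nhds (Q t)))
    (h : ℝ) (hh0 : 0 < h) (hQh : Q h = 0) :
    1 < cc.xi ^ ((9:ℝ) * h) ∧
    ∃ μ : MeasureTheory.Measure ℝ, MeasureTheory.IsProbabilityMeasure μ ∧ μ (cc.Eᶜ) = 0 ∧
      ∀ σ : List (Fin cc.N), σ ≠ [] →
        (cc.xi ^ ((9:ℝ) * h))⁻¹ * cc.diamJ σ ^ h ≤ (μ (cc.Jc σ)).toReal ∧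
        (μ (cc.Jc σ)).toReal ≤ cc.xi ^ ((9:ℝ) * h) * cc.diamJ σ ^ h := by
  obtain ⟨μ, hμ⟩ := gibbs_like_measure_exists_general cc hh0.le (hQh ▸ hQ h)
  have hη : cc.xi ^ (2 * h) ≤ cc.xi ^ (9 * h) :=
    Real.rpow_le_rpow_of_exponent_le cc.one_lt_xi.le (by linarith)
  obtain ⟨hprob, hE, hlower, hupper⟩ := hμ.mono (Real.rpow_pos_of_pos cc.xi_pos _) hη
  simp only [zero_mul, neg_zero, Real.exp_zero, one_mul] at hlower hupper
  exact ⟨Real.one_lt_rpow cc.one_lt_xi (by linarith), μ, hprob, hE, fun σ _ => ⟨hlower σ, hupper σ⟩⟩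
end
end
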